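/- For SNR > 0 and γ ∈ ℝ define R_lin(SNR, γ) := sup over primes p ∈ P'(γ) of min{ −(1/2)·log₂( 1/p² + √(2π/(3·SNR)) + (1/p)·exp(−(3·SNR/(2p²))·δ(p,γ)²) + 2·exp(−3·SNR/8) ), −log₂( 1/p + √(2π/(3·δ(p,γ)²·SNR)) + 2·exp(−3·SNR/8) ) }. Then for Lebesgue-almost every γ ∈ ℝ, liminf_{SNR → ∞} R_lin(SNR, γ) / ( (1/4)·log₂ SNR ) ≥ 1. -/

import Mathlib

open MeasureTheory ProbabilityTheory Real Filter
open scoped ENNReal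

noncomputable section

/-- Reduction of `x` modulo the half-open interval `[a, b)`. -/
def modIco (a b x : ℝ) : ℝ := a + (b - a) * Int.fract ((x - a) / (b - a))

/-- `L = √12`. -/
def Lc : ℝ := Real.sqrt 12

/-- `x*`: reduction of `x` modulo the basic interval `I = [-L/2, L/2)`. -/
def starI (x : ℝ) : ℝ := modIco (-(Lc / 2)) (Lc / 2) x

/-- `δ(p, γ) = min_{l ∈ {1,…,p−1}} |l·γ − ⌊l·γ⌉|`. -/
def deltaP (p : ℕ) (γ : ℝ) : ℝ :=
  sInf {d : ℝ | ∃ l : ℕ, 1 ≤ l ∧ l ≤ p - 1 ∧ d = |(l : ℝ) * γ - round ((l : ℝ) * γ)|}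

/-- The set `P'(γ)` of admissible primes (depends on the SNR). -/
def Pgood (SNR : ℝ) (γ : ℝ) : Set ℕ :=
  {p | p.Prime ∧
    Real.exp (-(3 * SNR / (2 * (p : ℝ) ^ 2)) * (modIco (-(1/4)) (1/4) γ) ^ 2) <
      1 - 2 * (p : ℝ) * Real.exp (-(3 * SNR / 8))}

/-- First rate expression in the achievable-rate theorem. -/
def rateA (SNR : ℝ) (p : ℕ) (γ : ℝ) : ℝ :=
  -(1/2) * Real.logb 2 (1/(p : ℝ)^2 + Real.sqrt (2 * π / (3 * SNR))
    + (1/(p : ℝ)) * Real.exp (-(3 * SNR / (2 * (p : ℝ)^2)) * (deltaP p γ)^2)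
    + 2 * Real.exp (-(3 * SNR / 8)))

/-- Second rate expression in the achievable-rate theorem. -/
def rateB (SNR : ℝ) (p : ℕ) (γ : ℝ) : ℝ :=
  -Real.logb 2 (1/(p : ℝ) + Real.sqrt (2 * π / (3 * (deltaP p γ)^2 * SNR))
    + 2 * Real.exp (-(3 * SNR / 8)))

/-- The `k`-th point of the constellation `Λ_p`. -/
def constPt (p : ℕ) (k : ℕ) : ℝ := starI (Lc / (p : ℝ) * (k : ℝ))

/-- The constellation `Λ_p` as a finite set of reals. -/
def constSet (p : ℕ) : Finset ℝ := (Finset.range p).image (constPt p)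

/-- The uniform probability measure on the constellation `Λ_p`. -/
def uniformConst (p : ℕ) : Measure ℝ :=
  (p : ℝ≥0∞)⁻¹ • ∑ k ∈ Finset.range p, Measure.dirac (constPt p k)

/-- The maximal symmetric rate `R_lin(SNR, γ)` achieved by the linear-code scheme. -/
def Rlin (SNR γ : ℝ) : ℝ :=
  sSup {x : ℝ | ∃ p ∈ Pgood SNR γ, x = min (rateA SNR p γ) (rateB SNR p γ)}

lemma finite_pos_lower (f : ℕ → ℝ) (hf : ∀ l, 1 ≤ l → 0 < f l) (N : ℕ) :
    ∃ c > 0, ∀ l, 1 ≤ l → l < N → c ≤ f l := by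
  induction N with
  | zero => exact ⟨1, one_pos, fun l _ h => by omega⟩
  | succ k ih =>
    obtain ⟨c, hc, h⟩ := ih
    rcases Nat.eq_zero_or_pos k with hk | hk
    · exact ⟨1, one_pos, fun l _ h => by omega⟩
    · refine ⟨min c (f k), lt_min hc (hf k hk), fun l h1 h2 => ?_⟩
      rcases Nat.lt_succ_iff_lt_or_eq.mp h2 with h3 | h3
      · exact (min_le_left _ _).trans (h l h1 h3)
      · subst h3; exact min_le_right _ _

lemma dioph_lower {γ ε : ℝ} (hγ : Irrational γ) (hε : 0 < ε) (hL : ¬ LiouvilleWith (2 + ε) γ) :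
    ∃ c > 0, ∀ l : ℕ, 1 ≤ l →
      c * (l : ℝ) ^ (-(1 + ε)) ≤ |(l : ℝ) * γ - round ((l : ℝ) * γ)| := by
  unfold LiouvilleWith at hL
  push Not at hL
  obtain ⟨N, hN⟩ := eventually_atTop.mp (hL 1)
  have hpos : ∀ l : ℕ, 1 ≤ l → 0 < |(l : ℝ) * γ - round ((l : ℝ) * γ)| := by
    intro l hl
    rw [abs_pos, sub_ne_zero]
    exact (hγ.natCast_mul (by omega)).ne_int _
  obtain ⟨c, hc, h⟩ := finite_pos_lower _ hpos N
  refine ⟨min c 1, lt_min hc one_pos, fun l hl => ?_⟩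
  have hl1 : (1 : ℝ) ≤ l := by exact_mod_cast hl
  have hl0 : (0 : ℝ) < l := by linarith
  have hp0 : 0 < (l : ℝ) ^ (-(1 + ε)) := rpow_pos_of_pos hl0 _
  rcases lt_or_ge l N with hlN | hlN
  · have h1 : (l : ℝ) ^ (-(1 + ε)) ≤ 1 := rpow_le_one_of_one_le_of_nonpos hl1 (by linarith)
    calc min c 1 * (l : ℝ) ^ (-(1 + ε)) ≤ c * 1 :=
          mul_le_mul (min_le_left _ _) h1 hp0.le hc.le
      _ ≤ _ := by rw [mul_one]; exact h l hl hlN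
  · have h2 := hN l hlN (round ((l : ℝ) * γ)) (by
      have := hγ.ne_rational (round ((l : ℝ) * γ)) l
      exact_mod_cast this)
    have h3 : |(l : ℝ) * γ - round ((l : ℝ) * γ)| = l * |γ - round ((l : ℝ) * γ) / l| := by
      rw [← abs_of_pos hl0, ← abs_mul, abs_of_pos hl0]
      congr 1
      field_simp
    have h4 : (l : ℝ) ^ (-(1 + ε)) = l * (1 / (l : ℝ) ^ (2 + ε)) := by
      rw [one_div, ← rpow_neg hl0.le]
      nth_rewrite 2 [← rpow_one (l : ℝ)]
      rw [← rpow_add hl0]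
      congr 1; ring
    calc min c 1 * (l : ℝ) ^ (-(1 + ε)) ≤ 1 * (l : ℝ) ^ (-(1 + ε)) := by
          gcongr; exact min_le_right _ _
      _ = l * (1 / (l : ℝ) ^ (2 + ε)) := by rw [one_mul, h4]
      _ ≤ _ := by rw [h3]; gcongr

lemma deltaP_lower {γ ε : ℝ} (hγ : Irrational γ) (hε : 0 < ε)
    (hL : ¬ LiouvilleWith (2 + ε) γ) :
    ∃ c > 0, ∀ p : ℕ, p.Prime → c * (p : ℝ) ^ (-(1 + ε)) ≤ deltaP p γ := by
  obtain ⟨c, hc, h⟩ := dioph_lower hγ hε hL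
  refine ⟨c, hc, fun p hp => ?_⟩
  have hp2 := hp.two_le
  apply le_csInf
  · exact ⟨_, 1, le_rfl, by omega, rfl⟩
  · rintro d ⟨l, h1, h2, rfl⟩
    refine le_trans ?_ (h l h1)
    have hl0 : (0 : ℝ) < l := by exact_mod_cast h1
    have hlp : (l : ℝ) ≤ p := by exact_mod_cast (by omega : l ≤ p)
    exact mul_le_mul_of_nonneg_left (rpow_le_rpow_of_nonpos hl0 hlp (by linarith)) hc.le

lemma modIco_ne_zero {γ : ℝ} (hγ : Irrational γ) : modIco (-(1/4)) (1/4) γ ≠ 0 := by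
  intro h
  unfold modIco at h
  rw [Int.fract] at h
  set z := ⌊(γ - -(1/4)) / (1/4 - -(1/4))⌋
  refine hγ ⟨(z : ℚ) / 2, ?_⟩
  push_cast
  have h2 : (1/4 - -(1/4) : ℝ) = 1/2 := by norm_num
  rw [h2] at h
  linarith

lemma rateA_le {S : ℝ} (hS : 0 < S) (p : ℕ) (γ : ℝ) :
    rateA S p γ ≤ (1/4) * logb 2 S := by
  unfold rateA
  have h0 : 0 < Real.sqrt (2 * π / (3 * S)) := by positivity
  have h1 : logb 2 (Real.sqrt (2 * π / (3 * S))) ≤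
      logb 2 (1/(p : ℝ)^2 + Real.sqrt (2 * π / (3 * S))
    + (1/(p : ℝ)) * Real.exp (-(3 * S / (2 * (p : ℝ)^2)) * (deltaP p γ)^2)
    + 2 * Real.exp (-(3 * S / 8))) := by
    apply logb_le_logb_of_le (by norm_num) h0
    have a1 : 0 ≤ 1/(p : ℝ)^2 := by positivity
    have a2 : 0 ≤ (1/(p : ℝ)) * Real.exp (-(3 * S / (2 * (p : ℝ)^2)) * (deltaP p γ)^2) := by
      positivity
    have a3 : 0 ≤ 2 * Real.exp (-(3 * S / 8)) := by positivity
    linarith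
  have h2 : logb 2 (Real.sqrt (S⁻¹)) ≤ logb 2 (Real.sqrt (2 * π / (3 * S))) := by
    apply logb_le_logb_of_le (by norm_num) (by positivity)
    apply Real.sqrt_le_sqrt
    rw [inv_eq_one_div, div_le_div_iff₀ hS (by positivity)]
    nlinarith [pi_gt_three]
  have h3 : logb 2 (Real.sqrt (S⁻¹)) = -(1/2) * logb 2 S := by
    rw [Real.sqrt_eq_rpow, logb_rpow_eq_mul_logb_of_pos (by positivity), logb_inv]; ring
  linarith

lemma Rlin_bdd {S : ℝ} (hS : 0 < S) (γ : ℝ) :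
    BddAbove {x : ℝ | ∃ p ∈ Pgood S γ, x = min (rateA S p γ) (rateB S p γ)} := by
  refine ⟨(1/4) * logb 2 S, ?_⟩
  rintro x ⟨p, _, rfl⟩
  exact (min_le_left _ _).trans (rateA_le hS p γ)

lemma Rlin_le {S : ℝ} (hS : 1 < S) (γ : ℝ) : Rlin S γ ≤ (1/4) * logb 2 S := by
  apply Real.sSup_le
  · rintro x ⟨p, _, rfl⟩
    exact (min_le_left _ _).trans (rateA_le (by linarith) p γ)
  · have := logb_pos (b := 2) (by norm_num) hS
    linarith

lemma cobdd (γ : ℝ) : IsCoboundedUnder (· ≥ ·) atTop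
    (fun SNR : ℝ => Rlin SNR γ / ((1/4) * Real.logb 2 SNR)) := by
  refine IsCoboundedUnder.of_frequently_le (a := 1) (Eventually.frequently ?_)
  filter_upwards [eventually_gt_atTop 1] with S hS
  have := logb_pos (b := 2) (by norm_num) hS
  rw [div_le_one (by linarith)]
  exact Rlin_le hS γ

/-- eventually `c * S^κ` dominates `M * log S + M`. -/
lemma ev_dom {c κ M : ℝ} (hc : 0 < c) (hκ : 0 < κ) (hM : 0 < M) :
    ∀ᶠ S : ℝ in atTop, M * log S ≤ c * S ^ κ ∧ M ≤ c * S ^ κ := by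
  have h1 := (isLittleO_log_rpow_atTop hκ).bound (show 0 < c / M by positivity)
  have h2 : Tendsto (fun S : ℝ => c * S ^ κ) atTop atTop :=
    (tendsto_rpow_atTop hκ).const_mul_atTop hc
  filter_upwards [h1, h2.eventually_ge_atTop M, eventually_gt_atTop 1] with S a b hS
  refine ⟨?_, b⟩
  have hp : 0 ≤ S ^ κ := rpow_nonneg (by linarith) _
  rw [Real.norm_of_nonneg (log_nonneg hS.le), Real.norm_of_nonneg hp] at a
  calc M * log S ≤ M * (c / M * S ^ κ) := by gcongr
    _ = _ := by field_simp

lemma exp_neg_le {S T : ℝ} (k : ℕ) (hS : 0 < S) (h : k * log S ≤ T) :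
    exp (-T) ≤ (S ^ k)⁻¹ := by
  rw [← exp_log (show 0 < (S ^ k)⁻¹ by positivity), log_inv, log_pow]
  exact exp_le_exp.mpr (by linarith)

/-- choice of prime -/
lemma choose_prime {S θ : ℝ} (hS : 1 ≤ S) (hθ : 0 < θ) :
    ∃ p : ℕ, p.Prime ∧ S ^ θ ≤ p ∧ (p : ℝ) ≤ 4 * S ^ θ := by
  have h1 : 1 ≤ S ^ θ := one_le_rpow hS hθ.le
  have hc : ⌈S ^ θ⌉₊ ≠ 0 := by
    have : 0 < ⌈S ^ θ⌉₊ := Nat.ceil_pos.mpr (by linarith)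
    omega
  obtain ⟨p, hp, h2, h3⟩ := Nat.exists_prime_lt_and_le_two_mul _ hc
  refine ⟨p, hp, ?_, ?_⟩
  · exact (Nat.le_ceil _).trans (by exact_mod_cast h2.le)
  · have h4 : (p : ℝ) ≤ 2 * (⌈S ^ θ⌉₊ : ℝ) := by exact_mod_cast h3
    have h5 := Nat.ceil_lt_add_one (show 0 ≤ S ^ θ by linarith)
    linarith

lemma rate_lower {S X d : ℝ} {p : ℕ} {γ : ℝ} (hS : 1 ≤ S) (hp : 0 < p) (hX : 1 ≤ X)
    (hXS : X ^ 4 ≤ S) (hXp : X ≤ p) (hd : d = deltaP p γ) (hd0 : 0 < d)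
    (hT1 : log S ≤ 3 * S / (2 * (p : ℝ) ^ 2) * d ^ 2)
    (hT2 : π ≤ 3 * S / (2 * (p : ℝ) ^ 2) * d ^ 2)
    (hE : exp (-(3 * S / 8)) ≤ (S ^ 2)⁻¹) :
    logb 2 X - 2 ≤ min (rateA S p γ) (rateB S p γ) := by
  have hp' : (0 : ℝ) < p := by exact_mod_cast hp
  have hX0 : 0 < X := by linarith
  have hS0 : 0 < S := by linarith
  have hX2 : 1 ≤ X ^ 2 := one_le_pow₀ hX
  have hX24 : X ^ 2 ≤ S := le_trans (pow_le_pow_right₀ hX (by norm_num)) hXS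
  have hX1S : X ≤ S := le_trans (by nlinarith) hX24
  have hSS : S ≤ S ^ 2 := by nlinarith
  have i1 : 1 / (p : ℝ) ≤ X⁻¹ := by
    rw [one_div]; exact inv_anti₀ hX0 hXp
  have i2 : 1 / (p : ℝ) ^ 2 ≤ (X ^ 2)⁻¹ := by
    rw [one_div]; exact inv_anti₀ (by positivity) (by gcongr)
  have e1 : exp (-(3 * S / 8)) ≤ X⁻¹ := hE.trans (inv_anti₀ hX0 (by linarith))
  have e2 : exp (-(3 * S / 8)) ≤ (X ^ 2)⁻¹ := hE.trans (inv_anti₀ (by positivity) (by linarith))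
  have hpi := pi_lt_four
  have hpi0 := pi_pos
  have q1 : Real.sqrt (2 * π / (3 * S)) ≤ 2 * (X ^ 2)⁻¹ := by
    apply Real.sqrt_le_iff.mpr ⟨by positivity, ?_⟩
    have : (2 * (X ^ 2)⁻¹) ^ 2 = 4 / X ^ 4 := by field_simp; norm_num
    rw [this, div_le_div_iff₀ (by positivity) (by positivity)]
    have : 2 * π * X ^ 4 ≤ 2 * 4 * S := by gcongr
    linarith
  have q2 : Real.sqrt (2 * π / (3 * d ^ 2 * S)) ≤ X⁻¹ := by
    apply Real.sqrt_le_iff.mpr ⟨by positivity, ?_⟩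
    rw [inv_pow]
    refine le_trans ?_ i2
    rw [div_le_div_iff₀ (by positivity) (by positivity)]
    rw [div_mul_eq_mul_div, le_div_iff₀ (by positivity)] at hT2
    linarith
  have x1 : exp (-(3 * S / (2 * (p : ℝ)^2)) * d^2) ≤ X⁻¹ := by
    have := exp_neg_le 1 hS0 (T := 3 * S / (2 * (p : ℝ)^2) * d^2) (by simpa using hT1)
    rw [neg_mul]
    refine this.trans ?_
    rw [pow_one]; exact inv_anti₀ hX0 hX1S
  have x2 : 1 / (p : ℝ) * exp (-(3 * S / (2 * (p : ℝ)^2)) * d^2) ≤ (X ^ 2)⁻¹ := by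
    calc _ ≤ X⁻¹ * X⁻¹ := by gcongr
      _ = _ := by rw [← mul_inv, sq]
  have l4 : logb 2 4 = 2 := by
    rw [show (4 : ℝ) = 2 ^ (2 : ℝ) by norm_num]; exact logb_rpow (by norm_num) (by norm_num)
  have l16 : logb 2 16 = 4 := by
    rw [show (16 : ℝ) = 2 ^ (4 : ℝ) by norm_num]; exact logb_rpow (by norm_num) (by norm_num)
  apply le_min
  · unfold rateA
    rw [← hd]
    have hle : 1/(p : ℝ)^2 + Real.sqrt (2 * π / (3 * S))
      + (1/(p : ℝ)) * Real.exp (-(3 * S / (2 * (p : ℝ)^2)) * d^2)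
      + 2 * Real.exp (-(3 * S / 8)) ≤ 16 * (X ^ 2)⁻¹ := by
      have : 0 < (X ^ 2)⁻¹ := by positivity
      linarith
    have := logb_le_logb_of_le (b := 2) (by norm_num) (by positivity) hle
    rw [logb_mul (by norm_num) (by positivity), logb_inv, logb_pow, l16] at this
    push_cast at this
    linarith
  · unfold rateB
    rw [← hd]
    have hle : 1/(p : ℝ) + Real.sqrt (2 * π / (3 * d^2 * S))
      + 2 * Real.exp (-(3 * S / 8)) ≤ 4 * X⁻¹ := by linarith
    have := logb_le_logb_of_le (b := 2) (by norm_num) (by positivity) hle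
    rw [logb_mul (by norm_num) (by positivity), logb_inv, l4] at this
    linarith

lemma Rlin_lower {γ b : ℝ} (hγ : Irrational γ) (hL : ∀ q > (2 : ℝ), ¬ LiouvilleWith q γ)
    (hb0 : 0 < b) (hb1 : b < 1) :
    ∀ᶠ S : ℝ in atTop, b / 4 * logb 2 S - 2 ≤ Rlin S γ := by
  have hε : 0 < 2 * (1 - b) := by linarith
  obtain ⟨c, hc, hδ⟩ := deltaP_lower hγ hε (hL _ (by linarith))
  set ε := 2 * (1 - b) with hεd
  have hx : 0 < (modIco (-(1/4)) (1/4) γ) ^ 2 := by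
    have := modIco_ne_zero hγ
    positivity
  set x := modIco (-(1/4)) (1/4) γ
  set θ := b / 4 with hθd
  have hθ : 0 < θ := by positivity
  set K := (4 : ℝ) ^ (-(1 + ε)) with hK
  have hK0 : 0 < K := by positivity
  have hκ : 0 < 1 - θ * (4 + 2 * ε) := by
    have : 1 - θ * (4 + 2 * ε) = (1 - b) ^ 2 := by rw [hθd, hεd]; ring
    rw [this]; exact pow_pos (by linarith) 2
  have E1 := ev_dom (c := 3 / 32 * (c * K) ^ 2) (κ := 1 - θ * (4 + 2 * ε)) (M := 4)
    (by positivity) hκ (by norm_num)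
  have E2 := ev_dom (c := 3 / 32 * x ^ 2) (κ := 1 - 2 * θ) (M := 1)
    (by positivity) (by rw [hθd]; linarith) (by norm_num)
  have E3 := ev_dom (c := 3 / 8) (κ := 1) (M := 2) (by norm_num) (by norm_num) (by norm_num)
  filter_upwards [E1, E2, E3, eventually_gt_atTop 9] with S e1 e2 e3 hS
  have hS0 : 0 < S := by linarith
  have hS1 : 1 ≤ S := by linarith
  obtain ⟨p, hp, hp1, hp2⟩ := choose_prime hS1 hθ
  have hp0 : (0 : ℝ) < p := by exact_mod_cast hp.pos
  have hX0 : 0 < S ^ θ := rpow_pos_of_pos hS0 _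
  have hE : exp (-(3 * S / 8)) ≤ (S ^ 2)⁻¹ := by
    apply exp_neg_le 2 hS0
    have := e3.1
    rw [rpow_one] at this
    push_cast
    have h8 : 3 * S / 8 = 3 / 8 * S := by ring
    rw [h8]
    exact this
  have hlog : 0 ≤ log S := log_nonneg hS1
  -- S / p^2 lower bound
  have hSp : 3 / 32 * S ^ (1 - 2 * θ) ≤ 3 * S / (2 * (p : ℝ) ^ 2) := by
    rw [le_div_iff₀ (by positivity)]
    calc 3 / 32 * S ^ (1 - 2 * θ) * (2 * (p : ℝ) ^ 2)
        ≤ 3 / 32 * S ^ (1 - 2 * θ) * (2 * (4 * S ^ θ) ^ 2) := by gcongr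
      _ = 3 * (S ^ (1 - 2 * θ) * S ^ θ * S ^ θ) := by ring
      _ = 3 * S := by
        rw [← rpow_add hS0, ← rpow_add hS0, show 1 - 2 * θ + θ + θ = 1 by ring, rpow_one]
  have hd : c * K * S ^ (-(θ * (1 + ε))) ≤ deltaP p γ := by
    refine le_trans ?_ (hδ p hp)
    have : (4 * S ^ θ) ^ (-(1 + ε)) ≤ (p : ℝ) ^ (-(1 + ε)) :=
      rpow_le_rpow_of_nonpos hp0 hp2 (by linarith)
    rw [mul_rpow (by norm_num) hX0.le, ← rpow_mul hS0.le, mul_neg] at this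
    calc _ = c * (K * S ^ (-(θ * (1 + ε)))) := by ring
      _ ≤ _ := by gcongr
  have hd0 : 0 < deltaP p γ := lt_of_lt_of_le (by positivity) hd
  have hT : 3 / 32 * (c * K) ^ 2 * S ^ (1 - θ * (4 + 2 * ε)) ≤
      3 * S / (2 * (p : ℝ) ^ 2) * (deltaP p γ) ^ 2 := by
    calc 3 / 32 * (c * K) ^ 2 * S ^ (1 - θ * (4 + 2 * ε))
        = (3 / 32 * S ^ (1 - 2 * θ)) * (c * K * S ^ (-(θ * (1 + ε)))) ^ 2 := by
          rw [show 1 - θ * (4 + 2 * ε) = (1 - 2 * θ) + -(θ * (1 + ε)) + -(θ * (1 + ε)) by ring,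
            rpow_add hS0, rpow_add hS0]
          ring
      _ ≤ _ := by gcongr
  have hX4 : (S ^ θ) ^ 4 ≤ S := by
    rw [← rpow_natCast, ← rpow_mul hS0.le]
    calc S ^ (θ * (4 : ℕ)) ≤ S ^ (1 : ℝ) :=
          rpow_le_rpow_of_exponent_le hS1 (by rw [hθd]; push_cast; linarith)
      _ = S := rpow_one S
  have hX1 : 1 ≤ S ^ θ := one_le_rpow hS1 hθ.le
  have hmain := rate_lower (γ := γ) hS1 hp.pos hX1 hX4 hp1 rfl hd0
    (by linarith [e1.1]) (by linarith [e1.2, pi_lt_four]) hE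
  rw [logb_rpow_eq_mul_logb_of_pos hS0] at hmain
  refine hmain.trans (le_csSup (Rlin_bdd hS0 γ) ⟨p, ⟨hp, ?_⟩, rfl⟩)
  have h1 : exp (-(3 * S / (2 * (p : ℝ) ^ 2)) * x ^ 2) ≤ S⁻¹ := by
    have := exp_neg_le 1 hS0 (T := 3 * S / (2 * (p : ℝ) ^ 2) * x ^ 2) (by
      have h2 : (3 / 32 * S ^ (1 - 2 * θ)) * x ^ 2 ≤ 3 * S / (2 * (p : ℝ) ^ 2) * x ^ 2 := by
        gcongr
      push_cast
      linarith [e2.1])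
    rwa [pow_one, ← neg_mul] at this
  refine lt_of_le_of_lt h1 ?_
  have h3 : S ^ θ ≤ S := by
    refine le_trans ?_ hX4
    exact le_self_pow₀ hX1 (by norm_num)
  have h4 : 2 * (p : ℝ) * exp (-(3 * S / 8)) ≤ 8 * S⁻¹ := by
    calc _ ≤ 2 * (4 * S) * (S ^ 2)⁻¹ := by gcongr; linarith
      _ = _ := by field_simp; norm_num
  have h5 : 9 * S⁻¹ < 1 := by
    rw [← div_eq_mul_inv, div_lt_one hS0]; exact hS
  linarith

lemma ae_irr : ∀ᵐ γ : ℝ, Irrational γ := by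
  have h : (Set.range ((↑) : ℚ → ℝ)).Countable := Set.countable_range _
  exact h.ae_notMem volume

/-- **Degrees of freedom.** For almost every `γ`, the achievable symmetric rate
`R_lin(SNR, γ)` scales like `(1/4)·log₂ SNR` as `SNR → ∞`. -/
theorem Rlin_dof_ae :
    ∀ᵐ γ : ℝ,
      1 ≤ Filter.liminf
            (fun SNR : ℝ => Rlin SNR γ / ((1/4) * Real.logb 2 SNR)) Filter.atTop := by
  filter_upwards [ae_irr, ae_not_liouvilleWith] with γ hγ hL
  refine le_of_forall_lt_imp_le_of_dense fun a ha => ?_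
  refine le_liminf_of_le (cobdd γ) ?_
  obtain ⟨b, hab, hb1⟩ := exists_between (max_lt ha (one_pos : (0:ℝ) < 1))
  have hb0 : 0 < b := (le_max_right _ _).trans_lt hab
  have hab' : a < b := (le_max_left _ _).trans_lt hab
  have ht : Tendsto (fun S : ℝ => logb 2 S) atTop atTop :=
    tendsto_logb_atTop (by norm_num)
  filter_upwards [Rlin_lower hγ hL hb0 hb1, ht.eventually_ge_atTop (8 / (b - a)),
    eventually_gt_atTop 1] with S h1 h2 hS
  have := logb_pos (b := 2) (by norm_num) hS
  rw [le_div_iff₀ (by linarith)]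
  rw [div_le_iff₀ (by linarith)] at h2
  nlinarith
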